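/- Let K be a positive compact bounded linear operator on L_p(X,π) and let h ∈ L_p(X,π) satisfy h(x) > 0 for π-almost every x. Then the local spectral radius of K at h satisfies ρ(K,h) = lim_{n→∞} ‖K^n h‖_p^{1/n} = ρ(K); in particular this limit exists. -/

import Mathlib

open MeasureTheory Filter Topology ENNReal

/-- The spectral radius of a bounded linear operator, via the Gelfand formula
`ρ(K) = lim_n ‖K^n‖^(1/n) = inf_{n ≥ 1} ‖K^n‖^(1/n)`. -/
noncomputable def specRad {E : Type*} [NormedAddCommGroup E] [NormedSpace ℝ E]
    (K : E →L[ℝ] E) : ℝ := ⨅ n : ℕ, ‖K ^ (n + 1)‖ ^ (1 / (n + 1) : ℝ)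

/-- The local spectral radius `ρ(K, h) = limsup_n ‖K^n h‖^(1/n)`. -/
noncomputable def locSpecRad {E : Type*} [NormedAddCommGroup E] [NormedSpace ℝ E]
    (K : E →L[ℝ] E) (h : E) : ℝ :=
  Filter.limsup (fun n : ℕ => ‖(K ^ n) h‖ ^ (1 / n : ℝ)) Filter.atTop

theorem approx_by_multiple
    {X : Type*} [MeasurableSpace X] (π : Measure X) [IsProbabilityMeasure π]
    (p : ℝ≥0∞) [hp : Fact (1 ≤ p)] (hp_top : p ≠ ⊤)
    (h : Lp ℝ p π) (hh : ∀ᵐ x ∂π, 0 < h x) (g : Lp ℝ p π) (ε : ℝ) (hε : 0 < ε) :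
    ∃ (c : ℝ) (g' : Lp ℝ p π), 0 ≤ c ∧ (∀ᵐ x ∂π, |g' x| ≤ c * h x) ∧ ‖g' - g‖ < ε := by
  set F : ℕ → X → ℝ := fun n x => max (min (g x) (n * h x)) (-(n * h x)) with hF
  have hmeas : ∀ n, AEStronglyMeasurable (F n) π := by
    intro n
    have h1 := (Lp.aestronglyMeasurable h).const_mul (n : ℝ)
    exact ((Lp.aestronglyMeasurable g).inf h1).sup h1.neg
  have hbound : ∀ n, ∀ᵐ x ∂π, ‖F n x‖ ≤ ‖g x‖ := by
    intro n
    filter_upwards [hh] with x hx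
    have h0 : 0 ≤ (n : ℝ) * h x := by positivity
    simp only [hF, Real.norm_eq_abs]
    rw [abs_le]
    constructor
    · rcases le_total (g x) (n * h x) with h1 | h1
      · rw [min_eq_left h1]; exact le_trans (neg_abs_le _) (le_max_left _ _)
      · rw [min_eq_right h1]
        exact le_trans (by linarith [abs_nonneg (g x)]) (le_max_left _ _)
    · apply max_le
      · exact (min_le_left _ _).trans (le_abs_self _)
      · linarith [abs_nonneg (g x)]
  have hLp : ∀ n, MemLp (F n) p π := fun n => (Lp.memLp g).mono (hmeas n) (hbound n)
  have hui : UnifIntegrable F p π := by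
    intro η hη
    obtain ⟨δ, hδ, H⟩ := unifIntegrable_const (ι := ℕ) hp.out hp_top (Lp.memLp g) hη
    refine ⟨δ, hδ, fun i s hs hsδ => le_trans ?_ (H i s hs hsδ)⟩
    apply eLpNorm_mono_ae
    filter_upwards [hbound i] with x hx
    by_cases hxs : x ∈ s <;> simp [hxs]
    simpa using hx
  have hlim : ∀ᵐ x ∂π, Tendsto (fun n => F n x) atTop (𝓝 (g x)) := by
    filter_upwards [hh] with x hx
    apply tendsto_const_nhds.congr'
    obtain ⟨N, hN⟩ := exists_nat_ge (|g x| / h x)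
    filter_upwards [eventually_ge_atTop N] with n hn
    have h1 : |g x| ≤ n * h x := by
      rw [div_le_iff₀ hx] at hN
      have : (N : ℝ) ≤ n := by exact_mod_cast hn
      nlinarith
    have h2 := abs_le.1 h1
    simp only [hF]
    rw [min_eq_left h2.2, max_eq_left h2.1]
  have key := tendsto_Lp_finite_of_tendsto_ae hp.out hp_top hmeas (Lp.memLp g) hui hlim
  rw [← Lp.tendsto_Lp_iff_tendsto_eLpNorm'' F hLp g (Lp.memLp g)] at key
  rw [Lp.toLp_coeFn, Metric.tendsto_atTop] at key
  obtain ⟨N, hN⟩ := key ε hε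
  refine ⟨N, (hLp N).toLp (F N), by positivity, ?_, ?_⟩
  · filter_upwards [(hLp N).coeFn_toLp, hh] with x hx hx'
    have h0 : 0 ≤ (N : ℝ) * h x := by positivity
    rw [hx, abs_le]
    refine ⟨le_max_right _ _, max_le (min_le_right _ _) (by linarith)⟩
  · have := hN N le_rfl
    rwa [dist_eq_norm] at this

theorem pow_pos_op
    {X : Type*} [MeasurableSpace X] (π : Measure X)
    (p : ℝ≥0∞) [Fact (1 ≤ p)]
    (K : Lp ℝ p π →L[ℝ] Lp ℝ p π)
    (hK_pos : ∀ g : Lp ℝ p π, (∀ᵐ x ∂π, 0 ≤ g x) → ∀ᵐ x ∂π, 0 ≤ (K g : X → ℝ) x)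
    (n : ℕ) : ∀ g : Lp ℝ p π, (∀ᵐ x ∂π, 0 ≤ g x) → ∀ᵐ x ∂π, 0 ≤ ((K ^ n) g : X → ℝ) x := by
  induction n with
  | zero => intro g hg; simpa using hg
  | succ n ih =>
    intro g hg
    rw [pow_succ]
    exact ih _ (hK_pos g hg)

theorem norm_pos_op
    {X : Type*} [MeasurableSpace X] (π : Measure X)
    (p : ℝ≥0∞) [Fact (1 ≤ p)]
    (T : Lp ℝ p π →L[ℝ] Lp ℝ p π)
    (hT : ∀ g : Lp ℝ p π, (∀ᵐ x ∂π, 0 ≤ g x) → ∀ᵐ x ∂π, 0 ≤ (T g : X → ℝ) x)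
    (h g : Lp ℝ p π) (c : ℝ) (hc : 0 ≤ c) (hg : ∀ᵐ x ∂π, |g x| ≤ c * h x) :
    ‖T g‖ ≤ c * ‖T h‖ := by
  apply Lp.norm_le_mul_norm_of_ae_le_mul
  have h1 := hT (c • h - g) (by
    filter_upwards [Lp.coeFn_sub (c • h) g, Lp.coeFn_smul c h, hg] with x h1 h2 h3
    rw [h1, Pi.sub_apply, h2, Pi.smul_apply, smul_eq_mul]
    linarith [(abs_le.1 h3).2])
  have h2 := hT (c • h + g) (by
    filter_upwards [Lp.coeFn_add (c • h) g, Lp.coeFn_smul c h, hg] with x h1 h2 h3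
    rw [h1, Pi.add_apply, h2, Pi.smul_apply, smul_eq_mul]
    linarith [(abs_le.1 h3).1])
  rw [map_sub, map_smul] at h1
  rw [map_add, map_smul] at h2
  filter_upwards [h1, h2, Lp.coeFn_add (c • T h) (T g), Lp.coeFn_sub (c • T h) (T g),
    Lp.coeFn_smul c (T h)] with x a1 a2 a3 a4 a5
  rw [a4, Pi.sub_apply, a5, Pi.smul_apply, smul_eq_mul] at a1
  rw [a3, Pi.add_apply, a5, Pi.smul_apply, smul_eq_mul] at a2
  have : |T g x| ≤ c * T h x := abs_le.2 ⟨by linarith, by linarith⟩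
  simp only [Real.norm_eq_abs]
  exact this.trans (mul_le_mul_of_nonneg_left (le_abs_self _) hc)

theorem compact_recursion
    {X : Type*} [MeasurableSpace X] (π : Measure X) [IsProbabilityMeasure π]
    (p : ℝ≥0∞) [Fact (1 ≤ p)] (hp_top : p ≠ ⊤)
    (K : Lp ℝ p π →L[ℝ] Lp ℝ p π)
    (hK_pos : ∀ g : Lp ℝ p π, (∀ᵐ x ∂π, 0 ≤ g x) → ∀ᵐ x ∂π, 0 ≤ (K g : X → ℝ) x)
    (hK_compact : IsCompactOperator ⇑K)
    (h : Lp ℝ p π) (hh : ∀ᵐ x ∂π, 0 < h x) (ε : ℝ) (hε : 0 < ε) :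
    ∃ C : ℝ, 0 ≤ C ∧ ∀ n : ℕ, ‖K ^ (n + 1)‖ ≤ C * ‖(K ^ n) h‖ + ε * ‖K ^ n‖ := by
  have hc : IsCompact (closure (K '' Metric.closedBall 0 1)) :=
    IsCompactOperator.isCompact_closure_image_closedBall (f := (K : Lp ℝ p π →ₗ[ℝ] Lp ℝ p π))
      hK_compact 1
  obtain ⟨t, -, htf, ht⟩ := Metric.finite_approx_of_totallyBounded hc.totallyBounded (ε / 2)
    (half_pos hε)
  have happ := fun g : Lp ℝ p π => approx_by_multiple π p hp_top h hh g (ε / 2) (half_pos hε)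
  choose c g' hc0 hg' hgg using happ
  refine ⟨∑ y ∈ htf.toFinset, c y, Finset.sum_nonneg fun y _ => hc0 y, fun n => ?_⟩
  have hC0 : 0 ≤ ∑ y ∈ htf.toFinset, c y := Finset.sum_nonneg fun y _ => hc0 y
  apply ContinuousLinearMap.opNorm_le_of_unit_norm (by positivity)
  intro f hf
  have hmem : K f ∈ closure (K '' Metric.closedBall 0 1) :=
    subset_closure ⟨f, by simp [hf], rfl⟩
  have := ht hmem
  simp only [Set.mem_iUnion, Metric.mem_ball, dist_eq_norm] at this
  obtain ⟨y, hy, hyd⟩ := this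
  have e1 : (K ^ (n + 1)) f = (K ^ n) (g' y) + (K ^ n) (K f - g' y) := by
    rw [pow_succ, ← map_add]; simp
  have e2 : ‖K f - g' y‖ ≤ ε := by
    have : K f - g' y = (K f - y) - (g' y - y) := by abel
    rw [this]
    have := norm_sub_le (K f - y) (g' y - y)
    linarith [hgg y]
  rw [e1]
  refine (norm_add_le _ _).trans (add_le_add ?_ ?_)
  · refine (norm_pos_op π p (K ^ n) (pow_pos_op π p K hK_pos n) h (g' y) (c y) (hc0 y)
      (hg' y)).trans ?_
    exact mul_le_mul_of_nonneg_right (Finset.single_le_sum (f := c) (fun y _ => hc0 y)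
      (htf.mem_toFinset.2 hy)) (norm_nonneg _)
  · refine ((K ^ n).le_opNorm _).trans ?_
    rw [mul_comm]
    exact mul_le_mul_of_nonneg_right e2 (norm_nonneg _)

section
variable {E : Type*} [NormedAddCommGroup E] [NormedSpace ℝ E] (K : E →L[ℝ] E)

theorem specRad_bdd : BddBelow (Set.range fun n : ℕ => ‖K ^ (n + 1)‖ ^ (1 / (n + 1) : ℝ)) :=
  ⟨0, by rintro _ ⟨n, rfl⟩; positivity⟩

theorem specRad_nonneg' : 0 ≤ specRad K :=
  Real.iInf_nonneg fun n => by positivity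

theorem specRad_pow_le (n : ℕ) : specRad K ^ (n + 1) ≤ ‖K ^ (n + 1)‖ := by
  have h1 : specRad K ≤ ‖K ^ (n + 1)‖ ^ (1 / (n + 1) : ℝ) := ciInf_le (specRad_bdd K) n
  calc specRad K ^ (n + 1) ≤ (‖K ^ (n + 1)‖ ^ (1 / (n + 1) : ℝ)) ^ (n + 1) :=
        pow_le_pow_left₀ (specRad_nonneg' K) h1 _
    _ = ‖K ^ (n + 1)‖ := by
        have := Real.rpow_inv_natCast_pow (norm_nonneg (K ^ (n + 1))) (Nat.succ_ne_zero n)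
        simpa using this

theorem norm_pow_le_of_gt (R : ℝ) (hR : specRad K < R) :
    ∃ M : ℝ, 0 < M ∧ ∀ n : ℕ, ‖K ^ n‖ ≤ M * R ^ n := by
  have hR0 : 0 < R := (specRad_nonneg' K).trans_lt hR
  obtain ⟨m, hm⟩ := exists_lt_of_ciInf_lt hR
  have hm' : ‖K ^ (m + 1)‖ ≤ R ^ (m + 1) := by
    have := Real.rpow_inv_natCast_pow (norm_nonneg (K ^ (m + 1))) (Nat.succ_ne_zero m)
    rw [← this]
    apply pow_le_pow_left₀ (by positivity)
    simpa using hm.le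
  have hnn : ∀ t, 0 ≤ ‖K ^ t‖ / R ^ t := fun t => by positivity
  have hs : 0 ≤ ∑ t ∈ Finset.range (m + 1), ‖K ^ t‖ / R ^ t :=
    Finset.sum_nonneg fun t _ => hnn t
  refine ⟨1 + ∑ t ∈ Finset.range (m + 1), ‖K ^ t‖ / R ^ t, by linarith, fun n => ?_⟩
  induction n using Nat.strong_induction_on with
  | _ n ih =>
    rcases lt_or_ge n (m + 1) with hn | hn
    · have := Finset.single_le_sum (f := fun t => ‖K ^ t‖ / R ^ t) (fun t _ => hnn t)
        (Finset.mem_range.2 hn)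
      rw [← div_le_iff₀ (by positivity)]
      linarith
    · obtain ⟨k, rfl⟩ := Nat.exists_eq_add_of_le hn
      have h1 := ih k (by omega)
      rw [pow_add, pow_add]
      calc _ ≤ ‖K ^ (m + 1)‖ * ‖K ^ k‖ := norm_mul_le _ _
        _ ≤ R ^ (m + 1) * _ := mul_le_mul hm' h1 (norm_nonneg _) (by positivity)
        _ = _ := by ring

theorem lower_bound (h : E)
    (H : ∀ ε : ℝ, 0 < ε → ∃ C : ℝ, 0 ≤ C ∧
      ∀ n : ℕ, ‖K ^ (n + 1)‖ ≤ C * ‖(K ^ n) h‖ + ε * ‖K ^ n‖)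
    (s : ℝ) (hs0 : 0 < s) (hs : s < specRad K) : ∀ᶠ n : ℕ in atTop, s ^ n < ‖(K ^ n) h‖ := by
  set r := specRad K with hr
  have hr0 : 0 < r := hs0.trans hs
  obtain ⟨R, hR, hR2⟩ : ∃ R, r < R ∧ R < r ^ 2 / s :=
    exists_between (by rw [lt_div_iff₀ hs0]; nlinarith)
  have hR0 : 0 < R := hr0.trans hR
  rw [lt_div_iff₀ hs0] at hR2
  obtain ⟨M, hM, hMR⟩ := norm_pow_le_of_gt K R hR
  obtain ⟨C, hC, hrec⟩ := H s hs0
  have hRs : 0 < R - s := by linarith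
  set D := C * M / (R - s) with hD
  have hD0 : 0 ≤ D := by positivity
  have hDeq : C * M + s * D = R * D := by
    rw [hD]; field_simp; ring
  have step : ∀ n k : ℕ, ‖K ^ (n + k)‖ ≤ D * R ^ k * ‖(K ^ n) h‖ + s ^ k * ‖K ^ n‖ := by
    intro n k
    induction k with
    | zero => simp; positivity
    | succ k ih =>
      have h1 := hrec (n + k)
      have h2 : ‖(K ^ (n + k)) h‖ ≤ M * R ^ k * ‖(K ^ n) h‖ := by
        rw [add_comm, pow_add]
        exact ((K ^ k).le_opNorm _).trans (mul_le_mul_of_nonneg_right (hMR k) (norm_nonneg _))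
      calc ‖K ^ (n + (k + 1))‖ ≤ C * ‖(K ^ (n + k)) h‖ + s * ‖K ^ (n + k)‖ := h1
        _ ≤ C * (M * R ^ k * ‖(K ^ n) h‖)
            + s * (D * R ^ k * ‖(K ^ n) h‖ + s ^ k * ‖K ^ n‖) := by gcongr
        _ = (C * M + s * D) * R ^ k * ‖(K ^ n) h‖ + s ^ (k + 1) * ‖K ^ n‖ := by ring
        _ = _ := by rw [hDeq]; ring
  have hq : Tendsto (fun n : ℕ => (D + M) * (R * s / r ^ 2) ^ n) atTop (𝓝 ((D + M) * 0)) :=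
    (_root_.tendsto_pow_atTop_nhds_zero_of_lt_one (by positivity)
      (by rw [div_lt_one (by positivity)]; exact hR2)).const_mul _
  rw [mul_zero] at hq
  filter_upwards [hq.eventually (gt_mem_nhds one_pos), eventually_ge_atTop 1] with n hn hn1
  by_contra hcon
  push Not at hcon
  have h1 := step n n
  have h2 : r ^ (n + n) ≤ ‖K ^ (n + n)‖ := by
    have := specRad_pow_le K (n + n - 1)
    rwa [Nat.sub_add_cancel (by omega)] at this
  have h3 : r ^ (n + n) ≤ (D + M) * (R * s) ^ n :=
    calc r ^ (n + n) ≤ _ := h2.trans h1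
      _ ≤ D * R ^ n * s ^ n + s ^ n * (M * R ^ n) := by
        gcongr
        exact hMR n
      _ = _ := by rw [mul_pow]; ring
  rw [div_pow, ← pow_mul, ← mul_div_assoc, div_lt_one (by positivity)] at hn
  rw [two_mul] at hn
  linarith

theorem tendsto_root (h : E)
    (H : ∀ ε : ℝ, 0 < ε → ∃ C : ℝ, 0 ≤ C ∧
      ∀ n : ℕ, ‖K ^ (n + 1)‖ ≤ C * ‖(K ^ n) h‖ + ε * ‖K ^ n‖) :
    Tendsto (fun n : ℕ => ‖(K ^ n) h‖ ^ (1 / n : ℝ)) atTop (𝓝 (specRad K)) := by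
  rw [tendsto_order]
  constructor
  · intro a ha
    rcases lt_or_ge a 0 with ha0 | ha0
    · exact Eventually.of_forall fun n => ha0.trans_le (by positivity)
    · obtain ⟨s, hs1, hs2⟩ := exists_between ha
      filter_upwards [lower_bound K h H s (ha0.trans_lt hs1) hs2, eventually_ge_atTop 1]
        with n hn hn1
      refine hs1.trans_le ?_
      have hs0 : 0 ≤ s := ha0.trans hs1.le
      have := Real.pow_rpow_inv_natCast hs0 (by omega : n ≠ 0)
      rw [← this, one_div]
      exact Real.rpow_le_rpow (by positivity) hn.le (by positivity)
  · intro b hb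
    obtain ⟨R, hR1, hR2⟩ := exists_between hb
    have hR0 : 0 < R := (specRad_nonneg' K).trans_lt hR1
    obtain ⟨M, hM, hMR⟩ := norm_pow_le_of_gt K R hR1
    set A := M * (‖h‖ + 1) with hA
    have hA0 : 0 < A := by positivity
    have hlim : Tendsto (fun n : ℕ => A ^ (n : ℝ)⁻¹ * R) atTop (𝓝 (1 * R)) := by
      refine Tendsto.mul_const R ?_
      exact ((continuous_iff_continuousAt.mpr fun _ =>
        Real.continuousAt_const_rpow hA0.ne').tendsto' 0 1 (Real.rpow_zero A)).comp
        (tendsto_inv_atTop_zero.comp tendsto_natCast_atTop_atTop)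
    rw [one_mul] at hlim
    filter_upwards [hlim.eventually (gt_mem_nhds hR2), eventually_ge_atTop 1] with n hn hn1
    refine lt_of_le_of_lt ?_ hn
    have := Real.pow_rpow_inv_natCast hR0.le (by omega : n ≠ 0)
    nth_rw 1 [← this]
    rw [one_div, ← Real.mul_rpow hA0.le (by positivity)]
    refine Real.rpow_le_rpow (norm_nonneg _) ?_ (by positivity)
    calc ‖(K ^ n) h‖ ≤ ‖K ^ n‖ * ‖h‖ := (K ^ n).le_opNorm h
      _ ≤ M * R ^ n * (‖h‖ + 1) := by
        gcongr
        · exact hMR n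
        · linarith
      _ = _ := by rw [hA]; ring

end

/-- **Zabreiko–Krasnosel'skii–Stetsenko–Zima local spectral radius theorem.**
Let `(X, F, π)` be a probability space, `p ∈ [1, ∞)`, and `K` a positive
compact bounded linear operator on `L_p(X, π)`.  If `h ∈ L_p(X, π)` satisfies
`h(x) > 0` for `π`-almost every `x`, then the local spectral radius of `K` at
`h` satisfies `ρ(K, h) = lim_n ‖K^n h‖_p^(1/n) = ρ(K)`; in particular this
limit exists. -/
theorem local_spectral_radius_eq
    {X : Type*} [MeasurableSpace X] (π : Measure X) [IsProbabilityMeasure π]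
    (p : ℝ≥0∞) [Fact (1 ≤ p)] (hp_top : p ≠ ⊤)
    (K : Lp ℝ p π →L[ℝ] Lp ℝ p π)
    (hK_pos : ∀ g : Lp ℝ p π, (∀ᵐ x ∂π, 0 ≤ g x) → ∀ᵐ x ∂π, 0 ≤ (K g : X → ℝ) x)
    (hK_compact : IsCompactOperator ⇑K)
    (h : Lp ℝ p π) (hh : ∀ᵐ x ∂π, 0 < h x) :
    locSpecRad K h = specRad K ∧
      Tendsto (fun n : ℕ => ‖(K ^ n) h‖ ^ (1 / n : ℝ)) atTop (𝓝 (specRad K)) := by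
  have hT := tendsto_root K h
    (fun ε hε => compact_recursion π p hp_top K hK_pos hK_compact h hh ε hε)
  exact ⟨hT.limsup_eq, hT⟩
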